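/- arXiv:1411.4387 — 2 statements merged into one kernel-verified Lean document; each statement's English description precedes it below -/
import Mathlib

section
/- Let α be real with 0 < α < 1 and set β = (1 + √α)/2. Then there do not exist nonnegative real numbers z₁, z₂, z₃, z₄, Z₁, Z₂, Z₃, Z₄ satisfying: z₁+z₂ = β, z₁+z₃ = β, Z₃+Z₄ = β, Z₂+Z₄ = β, z₃+z₄ = 1−β, z₂+z₄ = 1−β, Z₁+Z₂ = 1−β, Z₁+Z₃ = 1−β, and z_j + Z_j = 2ν_j for j = 1,…,4 where ν₁ = ν₄ = α/2 and ν₂ = ν₃ = (1−α)/2. -/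
/-- Three-ensemble steering contradiction: for `0 < α < 1` and `β = (1+√α)/2`,
the full system of Born-rule and ensemble-decomposition consistency conditions
has no nonnegative solution. -/
theorem steering_three_ensembles_no_lhv (α : ℝ) (hα0 : 0 < α) (hα1 : α < 1)
    (β : ℝ) (hβ : β = (1 + Real.sqrt α) / 2) :
    ¬ ∃ z₁ z₂ z₃ z₄ Z₁ Z₂ Z₃ Z₄ : ℝ,
      0 ≤ z₁ ∧ 0 ≤ z₂ ∧ 0 ≤ z₃ ∧ 0 ≤ z₄ ∧
      0 ≤ Z₁ ∧ 0 ≤ Z₂ ∧ 0 ≤ Z₃ ∧ 0 ≤ Z₄ ∧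
      z₁ + z₂ = β ∧ z₁ + z₃ = β ∧ Z₃ + Z₄ = β ∧ Z₂ + Z₄ = β ∧
      z₃ + z₄ = 1 - β ∧ z₂ + z₄ = 1 - β ∧ Z₁ + Z₂ = 1 - β ∧ Z₁ + Z₃ = 1 - β ∧
      z₁ + Z₁ = 2 * (α / 2) ∧ z₂ + Z₂ = 2 * ((1 - α) / 2) ∧
      z₃ + Z₃ = 2 * ((1 - α) / 2) ∧ z₄ + Z₄ = 2 * (α / 2) := by
  rintro ⟨z₁, z₂, z₃, z₄, Z₁, Z₂, Z₃, Z₄, h1, h2, h3, h4, k1, k2, k3, k4,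
    e1, e2, e3, e4, e5, e6, e7, e8, n1, n2, n3, n4⟩
  have hs : 0 < Real.sqrt α := Real.sqrt_pos.mpr hα0
  have hsq : Real.sqrt α * Real.sqrt α = α := Real.mul_self_sqrt hα0.le
  have hle : Real.sqrt α ≤ α := by linarith
  have hlt : Real.sqrt α < 1 := by
    rw [Real.sqrt_lt' one_pos]
    simpa using hα1
  have hmul : Real.sqrt α * Real.sqrt α < Real.sqrt α * 1 :=
    mul_lt_mul_of_pos_left hlt hs
  rw [hsq, mul_one] at hmul
  exact absurd hle (not_le.mpr hmul)
end

section
/- Let n, m be positive natural numbers and let v, w : Fin m → (Fin n → ℂ) be two families of vectors in ℂⁿ. Then Σᵢ (w i)(w i)* = Σᵢ (v i)(v i)* (equality of the n×n matrices whose (k,l) entries are Σᵢ (w i k)·conj(w i l) and Σᵢ (v i k)·conj(v i l)) if and only if there exists a unitary m×m complex matrix U such that w i = Σⱼ U i j • v j for every i. -/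
open scoped Matrix

lemma steering_exists_isometry {E F : Type*} [AddCommGroup E] [Module ℂ E]
    [NormedAddCommGroup F] [InnerProductSpace ℂ F] [FiniteDimensional ℂ F]
    (A B : E →ₗ[ℂ] F) (h : ∀ x, ‖A x‖ = ‖B x‖) :
    ∃ L : F →ₗᵢ[ℂ] F, ∀ x, L (A x) = B x := by
  have hk : LinearMap.ker A ≤ LinearMap.ker B := by
    intro x hx
    have h1 := h x
    rw [LinearMap.mem_ker.1 hx, norm_zero] at h1
    exact LinearMap.mem_ker.2 (norm_eq_zero.1 h1.symm)
  let f : LinearMap.range A →ₗ[ℂ] F :=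
    ((LinearMap.ker A).liftQ B hk) ∘ₗ A.quotKerEquivRange.symm.toLinearMap
  have hf : ∀ x, f ⟨A x, LinearMap.mem_range_self A x⟩ = B x := by
    intro x
    have : A.quotKerEquivRange.symm ⟨A x, LinearMap.mem_range_self A x⟩
        = (LinearMap.ker A).mkQ x := A.quotKerEquivRange_symm_apply_image x _
    simp only [f, LinearMap.comp_apply, LinearEquiv.coe_coe, this]
    simp
  let g : LinearMap.range A →ₗᵢ[ℂ] F := ⟨f, by
    rintro ⟨_, x, rfl⟩
    rw [hf, ← h]
    rfl⟩
  refine ⟨g.extend, fun x => ?_⟩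
  exact (g.extend_apply ⟨A x, LinearMap.mem_range_self A x⟩).trans (hf x)

lemma steering_matrix {n m : ℕ} (V W : Matrix (Fin m) (Fin n) ℂ)
    (h : Wᴴ * W = Vᴴ * V) :
    ∃ U ∈ Matrix.unitaryGroup (Fin m) ℂ, W = U * V := by
  let T (M : Matrix (Fin m) (Fin n) ℂ) : (Fin n → ℂ) →ₗ[ℂ] EuclideanSpace ℂ (Fin m) :=
    (WithLp.linearEquiv 2 ℂ (Fin m → ℂ)).symm.toLinearMap ∘ₗ M.mulVecLin
  have hT : ∀ M x, T M x = WithLp.toLp 2 (M *ᵥ x) := fun M x => rfl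
  have hn : ∀ M x, ((‖T M x‖ : ℂ)) ^ 2 = star x ⬝ᵥ ((Mᴴ * M) *ᵥ x) := by
    intro M x
    have := inner_self_eq_norm_sq_to_K (𝕜 := ℂ) (T M x)
    refine this.symm.trans ?_
    rw [hT, EuclideanSpace.inner_toLp_toLp, dotProduct_comm, Matrix.star_mulVec,
      ← Matrix.dotProduct_mulVec, Matrix.mulVec_mulVec]
  obtain ⟨L, hL⟩ := steering_exists_isometry (T V) (T W) (by
    intro x
    have h1 : ((‖T V x‖ : ℂ)) ^ 2 = (‖T W x‖ : ℂ) ^ 2 := by rw [hn, hn, h]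
    have h2 : ‖T V x‖ ^ 2 = ‖T W x‖ ^ 2 := by exact_mod_cast h1
    exact (sq_eq_sq₀ (norm_nonneg _) (norm_nonneg _)).1 h2)
  let b := EuclideanSpace.basisFun (Fin m) ℂ
  let e := L.toLinearIsometryEquiv rfl
  refine ⟨_, e.toMatrix_mem_unitaryGroup b b, ?_⟩
  ext i j
  have h1 := LinearMap.toMatrix_mulVec_repr b.toBasis b.toBasis
    (e.toLinearEquiv : EuclideanSpace ℂ (Fin m) →ₗ[ℂ] EuclideanSpace ℂ (Fin m))
    (T V (Pi.single j 1))
  have h2 := congrFun h1 i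
  have h3 : e (T V (Pi.single j 1)) = T W (Pi.single j 1) := hL _
  simp [b, hT, Matrix.mulVec, dotProduct] at h2
  have h4 : (e (WithLp.toLp 2 (V.col j))).ofLp i = W i j := by
    simp only [hT, Matrix.mulVec_single_one] at h3
    rw [h3]
    rfl
  rw [Matrix.mul_apply]
  exact h4.symm.trans h2.symm

lemma steering_sum {n m : ℕ} (v : Fin m → (Fin n → ℂ)) :
    ∑ i, Matrix.vecMulVec (v i) (star (v i)) = ((Matrix.of v)ᴴ * Matrix.of v)ᵀ := by
  ext k l
  simp [Matrix.sum_apply, Matrix.vecMulVec_apply, Matrix.mul_apply, mul_comm]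

/-- Core of Schrödinger's steering (HJW) theorem: two families of
subnormalized vectors `v, w : Fin m → ℂⁿ` average to the same (unnormalized)
density matrix `∑ i, (w i)(w i)* = ∑ i, (v i)(v i)*` if and only if they are
related by an `m × m` unitary matrix, `w i = ∑ j, U i j • v j`. -/
theorem steering_theorem_unitary_mixing (n m : ℕ) (hn : 0 < n) (hm : 0 < m)
    (v w : Fin m → (Fin n → ℂ)) :
    (∑ i, Matrix.vecMulVec (w i) (star (w i)) =
      ∑ i, Matrix.vecMulVec (v i) (star (v i))) ↔
    ∃ U : Matrix (Fin m) (Fin m) ℂ, U ∈ Matrix.unitaryGroup (Fin m) ℂ ∧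
      ∀ i, w i = ∑ j, U i j • v j := by
  rw [steering_sum, steering_sum, Matrix.transpose_inj]
  have key : ∀ U : Matrix (Fin m) (Fin m) ℂ,
      (∀ i, w i = ∑ j, U i j • v j) ↔ Matrix.of w = U * Matrix.of v := by
    intro U
    constructor
    · intro h
      ext i k
      simp [h i, Matrix.mul_apply]
    · intro h i
      ext k
      have := congrFun (congrFun h i) k
      simpa [Matrix.mul_apply] using this
  simp only [key]
  constructor
  · intro h
    exact steering_matrix _ _ h
  · rintro ⟨U, hU, h⟩
    have hU' : Uᴴ * U = 1 := Matrix.mem_unitaryGroup_iff'.1 hU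
    rw [h, Matrix.conjTranspose_mul, Matrix.mul_assoc, ← Matrix.mul_assoc Uᴴ, hU',
      Matrix.one_mul]
end
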